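/- (Alternating paths decrease matching deficiency.) Let G = (L, R, E) be a finite bipartite graph, let U ⊆ L, let q ≥ 1 be an integer, and let M ⊆ E be a matching such that every vertex of U is incident to at most q edges of M. Suppose there exists an alternating path P = (v₁, u₁, v₂, u₂, …, v_m, u_m) with all vertices distinct, where for every i ∈ [m]: v_i ∈ R, u_i ∈ U, and {v_i, u_i} ∈ E \ M; for every i ∈ [m−1]: {u_i, v_{i+1}} ∈ M; the vertex v₁ is free (incident to no edge of M); and def_M(u_m) > 0. Then there exists a matching M' with def(M') = def(M) − 1, where for i ∈ U, def_M(i) = max(0, q − |{ j ∈ R : {i,j} ∈ M }|) and def(M) = Σ_{i ∈ U} def_M(i). -/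

import Mathlib

open Finset

/-- `M` is a matching: every right vertex is incident to at most one edge. -/
def IsMatching {L R : Type*} (M : Finset (L × R)) : Prop :=
  ∀ j : R, ∀ i i' : L, (i, j) ∈ M → (i', j) ∈ M → i = i'

/-- `N_M(i)`: the right vertices matched to `i` by `M`. -/
def matchNbrs {L R : Type*} [Fintype R] [DecidableEq L] [DecidableEq R]
    (M : Finset (L × R)) (i : L) : Finset R :=
  Finset.univ.filter fun j => (i, j) ∈ M

/-- The deficiency `def(M) = Σ_{i ∈ U} max(0, q − |N_M(i)|)` of a matching `M`
with respect to `U` and the target degree `q` (using truncated subtraction). -/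
def deficiency {L R : Type*} [Fintype R] [DecidableEq L] [DecidableEq R]
    (M : Finset (L × R)) (U : Finset L) (q : ℕ) : ℕ :=
  ∑ i ∈ U, (q - (matchNbrs M i).card)

/-!
Shifting one matching edge `{u, v'}` to `{u, v}`, where `v` is free, changes no left degree and
makes `v'` free. Shifting along the alternating path therefore moves the free right vertex from
`v₁` to `v_m` without changing any deficiency, and adding `{u_m, v_m}` then covers one unit of the
deficiency of `u_m`.
-/

section

variable {L R : Type*} {M : Finset (L × R)} {i : L} {j j' : R}

/-- `j` is a free right vertex of `M`: no edge of `M` is incident to it. -/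
def IsFree (M : Finset (L × R)) (j : R) : Prop :=
  ∀ i : L, (i, j) ∉ M

theorem IsMatching.mono {M' : Finset (L × R)} (hM : IsMatching M) (h : M' ⊆ M) : IsMatching M' :=
  fun j i i' hi hi' => hM j i i' (h hi) (h hi')

theorem IsFree.mono {M' : Finset (L × R)} (hj : IsFree M j) (h : M' ⊆ M) : IsFree M' j :=
  fun i hi => hj i (h hi)

variable [DecidableEq L] [DecidableEq R]

protected theorem IsFree.insert (hj' : IsFree M j') (hne : j' ≠ j) (i : L) :
    IsFree (insert (i, j) M) j' := by
  intro k hk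
  rcases mem_insert.1 hk with heq | hk
  · exact hne (congrArg Prod.snd heq)
  · exact hj' k hk

protected theorem IsMatching.insert (hM : IsMatching M) (hj : IsFree M j) (i : L) :
    IsMatching (insert (i, j) M) := by
  intro k a b ha hb
  simp only [mem_insert, Prod.mk.injEq] at ha hb
  rcases ha with ⟨rfl, rfl⟩ | ha <;> rcases hb with ⟨rfl, hk⟩ | hb
  · rfl
  · exact absurd hb (hj b)
  · exact absurd (hk ▸ ha) (hj a)
  · exact hM k a b ha hb

theorem IsMatching.isFree_erase (hM : IsMatching M) (hij : (i, j) ∈ M) :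
    IsFree (M.erase (i, j)) j := by
  intro k hk
  obtain rfl : k = i := hM j k i (mem_of_mem_erase hk) hij
  exact notMem_erase _ _ hk

/-- The edge set obtained from `M` by shifting the right endpoint of the edge `(i, j')` to `j`:
the elementary step of augmentation along an alternating path. -/
def shiftEdge (M : Finset (L × R)) (i : L) (j' j : R) : Finset (L × R) :=
  insert (i, j) (M.erase (i, j'))

protected theorem IsMatching.shiftEdge (hM : IsMatching M) (hj : IsFree M j) (i : L) (j' : R) :
    IsMatching (shiftEdge M i j' j) :=
  (hM.mono (erase_subset _ _)).insert (hj.mono (erase_subset _ _)) i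

theorem IsMatching.isFree_shiftEdge (hM : IsMatching M) (hij' : (i, j') ∈ M) (hne : j' ≠ j) :
    IsFree (shiftEdge M i j' j) j' :=
  (hM.isFree_erase hij').insert hne i

theorem shiftEdge_subset {E : Finset (L × R)} (hME : M ⊆ E) (hij : (i, j) ∈ E) (j' : R) :
    shiftEdge M i j' j ⊆ E :=
  insert_subset hij ((erase_subset _ _).trans hME)

theorem mem_shiftEdge_of_mem {k : L} {l : R} (hkl : (k, l) ∈ M) (hne : l ≠ j') :
    (k, l) ∈ shiftEdge M i j' j :=
  mem_insert_of_mem (mem_erase_of_ne_of_mem (fun h => hne (congrArg Prod.snd h)) hkl)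

variable [Fintype R]

theorem mem_matchNbrs : j ∈ matchNbrs M i ↔ (i, j) ∈ M :=
  mem_filter_univ j

theorem card_matchNbrs_insert (hij : (i, j) ∉ M) (k : L) :
    #(matchNbrs (insert (i, j) M) k) = #(matchNbrs M k) + if k = i then 1 else 0 := by
  split_ifs with hk
  · subst hk
    have hinsert : matchNbrs (insert (k, j) M) k = insert j (matchNbrs M k) := by
      ext l
      simp [mem_matchNbrs]
    rw [hinsert, card_insert_of_notMem (mt mem_matchNbrs.1 hij)]
  · have hsame : matchNbrs (insert (i, j) M) k = matchNbrs M k := by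
      ext l
      simp [mem_matchNbrs, hk]
    rw [hsame, add_zero]

theorem card_matchNbrs_shiftEdge (hij' : (i, j') ∈ M) (hij : (i, j) ∉ M) (k : L) :
    #(matchNbrs (shiftEdge M i j' j) k) = #(matchNbrs M k) := by
  rw [shiftEdge, card_matchNbrs_insert (mt mem_of_mem_erase hij),
    ← card_matchNbrs_insert (notMem_erase (i, j') M), insert_erase hij']

theorem deficiency_congr {M' : Finset (L × R)} {U : Finset L}
    (h : ∀ i ∈ U, #(matchNbrs M' i) = #(matchNbrs M i)) (q : ℕ) :
    deficiency M' U q = deficiency M U q :=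
  sum_congr rfl fun i hi => by rw [h i hi]

theorem deficiency_insert_add_one {U : Finset L} {q : ℕ} (hi : i ∈ U) (hij : (i, j) ∉ M)
    (hdef : #(matchNbrs M i) < q) :
    deficiency (insert (i, j) M) U q + 1 = deficiency M U q := by
  have hrest : deficiency (insert (i, j) M) (U.erase i) q = deficiency M (U.erase i) q :=
    deficiency_congr
      (fun k hk => by rw [card_matchNbrs_insert hij, if_neg (ne_of_mem_erase hk), add_zero]) q
  have hcard : #(matchNbrs (insert (i, j) M) i) = #(matchNbrs M i) + 1 := by
    rw [card_matchNbrs_insert hij, if_pos rfl]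
  unfold deficiency at hrest ⊢
  rw [← add_sum_erase U _ hi, ← add_sum_erase U _ hi, hrest, hcard]
  omega

theorem exists_isMatching_isFree_last {E : Finset (L × R)} {n : ℕ} {v : Fin (n + 1) → R}
    {u : Fin n → L} (hME : M ⊆ E) (hM : IsMatching M) (hv : Function.Injective v)
    (hE : ∀ k, (u k, v k.castSucc) ∈ E) (huM : ∀ k, (u k, v k.succ) ∈ M) (hfree : IsFree M (v 0)) :
    ∃ M' ⊆ E, IsMatching M' ∧ IsFree M' (v (Fin.last n)) ∧
      ∀ i, #(matchNbrs M' i) = #(matchNbrs M i) := by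
  induction n generalizing M with
  | zero => exact ⟨M, hME, hM, hfree, fun _ => rfl⟩
  | succ n ih =>
    have hv10 : v (Fin.succ 0) ≠ v 0 := hv.ne (Fin.succ_ne_zero 0)
    have htail : ∀ k : Fin n,
        (u k.succ, v k.succ.succ) ∈ shiftEdge M (u 0) (v (Fin.succ 0)) (v 0) := fun k =>
      mem_shiftEdge_of_mem (huM k.succ)
        (hv.ne ((Fin.succ_injective _).ne (Fin.succ_ne_zero k)))
    obtain ⟨M', hM'E, hM', hlast, hcard⟩ :=
      ih (v := v ∘ Fin.succ) (u := u ∘ Fin.succ) (shiftEdge_subset hME (hE 0) _)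
        (hM.shiftEdge hfree _ _) (hv.comp (Fin.succ_injective _)) (fun k => hE k.succ) htail
        (hM.isFree_shiftEdge (huM 0) hv10)
    exact ⟨M', hM'E, hM', hlast, fun i =>
      (hcard i).trans (card_matchNbrs_shiftEdge (huM 0) (hfree (u 0)) i)⟩

theorem alternating_path_decreases_deficiency_general {E : Finset (L × R)} {U : Finset L} {q n : ℕ}
    {v : Fin (n + 1) → R} {u : Fin (n + 1) → L} (hME : M ⊆ E) (hM : IsMatching M)
    (hv : Function.Injective v) (hU : u (Fin.last n) ∈ U) (hE : ∀ k, (u k, v k) ∈ E)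
    (huM : ∀ k : Fin n, (u k.castSucc, v k.succ) ∈ M) (hfree : IsFree M (v 0))
    (hdef : #(matchNbrs M (u (Fin.last n))) < q) :
    ∃ M' ⊆ E, IsMatching M' ∧ deficiency M' U q + 1 = deficiency M U q := by
  obtain ⟨M', hM'E, hM', hlast, hcard⟩ :=
    exists_isMatching_isFree_last hME hM hv (fun k => hE k.castSucc) huM hfree
  refine ⟨insert (u (Fin.last n), v (Fin.last n)) M', insert_subset (hE _) hM'E,
    hM'.insert hlast _, ?_⟩
  rw [deficiency_insert_add_one hU (hlast _) ((hcard _).trans_lt hdef),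
    deficiency_congr fun i _ => hcard i]

end

/-- Alternating paths decrease matching deficiency: given a matching `M ⊆ E`
in which every vertex of `U` is incident to at most `q` edges, and an
alternating path `(v₁, u₁, …, v_m, u_m)` with distinct vertices, where each
`{v_i, u_i} ∈ E \ M`, each `{u_i, v_{i+1}} ∈ M`, `v₁` is free, and
`def_M(u_m) > 0`, there exists a matching `M' ⊆ E` with
`def(M') = def(M) − 1`. -/
theorem alternating_path_decreases_deficiency
    {L R : Type*} [Fintype L] [Fintype R] [DecidableEq L] [DecidableEq R]
    (E : Finset (L × R)) (U : Finset L) (q : ℕ) (hq : 1 ≤ q)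
    (M : Finset (L × R)) (hME : M ⊆ E) (hmatch : IsMatching M)
    (hbound : ∀ i ∈ U, (matchNbrs M i).card ≤ q)
    (m : ℕ) (hm : 0 < m) (v : Fin m → R) (u : Fin m → L)
    (hvinj : Function.Injective v) (huinj : Function.Injective u)
    (huU : ∀ i : Fin m, u i ∈ U)
    (hEdge : ∀ i : Fin m, (u i, v i) ∈ E ∧ (u i, v i) ∉ M)
    (hMedge : ∀ (i : ℕ) (hi : i + 1 < m),
      (u ⟨i, Nat.lt_of_succ_lt hi⟩, v ⟨i + 1, hi⟩) ∈ M)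
    (hfree : ∀ x : L, (x, v ⟨0, hm⟩) ∉ M)
    (hdef : (matchNbrs M (u ⟨m - 1, Nat.sub_lt hm Nat.one_pos⟩)).card < q) :
    ∃ M' ⊆ E, IsMatching M' ∧ deficiency M' U q + 1 = deficiency M U q := by
  obtain ⟨n, rfl⟩ := Nat.exists_eq_succ_of_ne_zero hm.ne'
  exact alternating_path_decreases_deficiency_general hME hmatch hvinj (huU _)
    (fun k => (hEdge k).1) (fun k => hMedge k (Nat.succ_lt_succ k.isLt)) hfree hdef
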